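/- Assume (A1)–(A5). Given any solution (X, U) of the relaxed controlled martingale problem for (𝒜, ν), there exist a measurable relaxed Markov control v̄ : E × [0, ∞) → P(𝕌) and a process X′ which, together with the control U′_t := v̄(X′_t, t), solves the relaxed controlled martingale problem for (𝒜, ν), such that X′_0 has the same law as X_0 and, for every t ≥ 0, the law of X′_t equals the law of X_t (identical one-dimensional marginals). Moreover X′ can be taken to be a Markov process. -/

import Mathlib

open MeasureTheory Set

section Defs

/-- Bounded measurable real-valued functions (`B_b`). -/
def BddMeas {α : Type*} [MeasurableSpace α] (f : α → ℝ) : Prop :=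
  Measurable f ∧ ∃ C, ∀ x, |f x| ≤ C

/-- Progressive measurability of a process w.r.t. a family of σ-algebras. -/
def ProgMeas {Ω β : Type*} [MeasurableSpace β] (ℱ : ℝ → MeasurableSpace Ω)
    (Z : ℝ → Ω → β) : Prop :=
  ∀ t : ℝ, 0 ≤ t →
    Measurable[((inferInstance : MeasurableSpace (Icc (0:ℝ) t)).prod (ℱ t))]
      (fun p : Icc (0:ℝ) t × Ω => Z p.1 p.2)

/-- A real-valued process is a martingale w.r.t. the filtration `ℱ` and measure `P`. -/
def IsMart {Ω : Type*} {m0 : MeasurableSpace Ω} (P : Measure Ω)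
    (ℱ : ℝ → MeasurableSpace Ω) (M : ℝ → Ω → ℝ) : Prop :=
  (∀ t, 0 ≤ t → Integrable (M t) P) ∧
  (∀ t, 0 ≤ t → Measurable[ℱ t] (M t)) ∧
  ∀ s t : ℝ, 0 ≤ s → s ≤ t → P[M t|ℱ s] =ᵐ[P] M s

variable {E 𝕌 : Type*} [MeasurableSpace E] [MeasurableSpace 𝕌]

/-- `𝒜̄ f (x, m) = ∫_𝕌 𝒜 f (x, u) m(du)`. -/
noncomputable def Abar (A : (E → ℝ) → E × 𝕌 → ℝ) (f : E → ℝ) (x : E) (m : Measure 𝕌) : ℝ :=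
  ∫ u, A f (x, u) ∂m

/-- `(X, U)` solves the relaxed controlled martingale problem for `(𝒜, ν)` (domain `D`)
on the filtered probability space `(Ω, ℱ, P)`:  both processes are progressively
measurable, each `U t ω ∈ P(𝕌)`, `law (X 0) = ν`, and for every `f ∈ D`,
`f(X t) - f(X 0) - ∫_0^t ∫_𝕌 𝒜 f (X s, u) U s (du) ds` is a martingale. -/
structure IsRelaxedSol (D : Set (E → ℝ)) (A : (E → ℝ) → E × 𝕌 → ℝ) (ν : Measure E)
    {Ω : Type*} {m0 : MeasurableSpace Ω} (P : Measure Ω)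
    (ℱ : ℝ → MeasurableSpace Ω) (X : ℝ → Ω → E) (U : ℝ → Ω → Measure 𝕌) : Prop where
  prob : IsProbabilityMeasure P
  le : ∀ t, ℱ t ≤ m0
  mono : Monotone ℱ
  progX : ProgMeas ℱ X
  progU : ProgMeas ℱ U
  probU : ∀ t ω, IsProbabilityMeasure (U t ω)
  init : P.map (X 0) = ν
  mart : ∀ f ∈ D, IsMart P ℱ
    (fun t ω => f (X t ω) - f (X 0 ω) - ∫ s in Ioc (0:ℝ) t, Abar A f (X s ω) (U s ω))

/-- `X` solves the (uncontrolled, possibly time-inhomogeneous) martingale problem for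
the generator `L` (with `L f s x` the generator applied at time `s` and state `x`),
domain `D` and initial law `ν`. -/
structure IsMPSol (D : Set (E → ℝ)) (L : (E → ℝ) → ℝ → E → ℝ) (ν : Measure E)
    {Ω : Type*} {m0 : MeasurableSpace Ω} (P : Measure Ω)
    (ℱ : ℝ → MeasurableSpace Ω) (X : ℝ → Ω → E) : Prop where
  prob : IsProbabilityMeasure P
  le : ∀ t, ℱ t ≤ m0
  mono : Monotone ℱ
  progX : ProgMeas ℱ X
  init : P.map (X 0) = ν
  mart : ∀ f ∈ D, IsMart P ℱ
    (fun t ω => f (X t ω) - f (X 0 ω) - ∫ s in Ioc (0:ℝ) t, L f s (X s ω))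

/-- A path is r.c.l.l. on `[0, ∞)`: right-continuous with left limits. -/
def RCLLPath {β : Type*} [TopologicalSpace β] (x : ℝ → β) : Prop :=
  (∀ t : ℝ, 0 ≤ t → ContinuousWithinAt x (Ici t) t) ∧
  (∀ t : ℝ, 0 < t → ∃ l, Filter.Tendsto x (nhdsWithin t (Iio t)) (nhds l))

/-- The process `X` is a Markov process w.r.t. `(P, ℱ)`: for `0 ≤ s ≤ t` and bounded
measurable `g`, `E[g(X t) | ℱ s] = E[g(X t) | σ(X s)]` a.s. -/
def IsMarkovProc {Ω : Type*} {m0 : MeasurableSpace Ω} (P : Measure Ω)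
    (ℱ : ℝ → MeasurableSpace Ω) (X : ℝ → Ω → E) : Prop :=
  ∀ s t : ℝ, 0 ≤ s → s ≤ t → ∀ g : E → ℝ, BddMeas g →
    P[fun ω => g (X t ω)|ℱ s]
      =ᵐ[P] P[fun ω => g (X t ω)|MeasurableSpace.comap (X s) inferInstance]

/-- A set of real-valued functions closed under bounded pointwise convergence. -/
def BPClosed {α : Type*} (S : Set (α → ℝ)) : Prop :=
  ∀ (F : ℕ → α → ℝ) (g : α → ℝ), (∀ n, F n ∈ S) → (∃ C, ∀ n x, |F n x| ≤ C) →
    (∀ x, Filter.Tendsto (fun n => F n x) Filter.atTop (nhds (g x))) → g ∈ S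

/-- The bounded pointwise (bp) closure of a set of real-valued functions. -/
def bpClosure {α : Type*} (S : Set (α → ℝ)) : Set (α → ℝ) :=
  ⋂₀ {T | S ⊆ T ∧ BPClosed T}

/-- A pair `(g, h)` with `g : E → ℝ`, `h : E × 𝕌 → ℝ` encoded as one function on the sum
type, so that bp-convergence of pairs is bp-convergence of these functions. -/
def pairFun (g : E → ℝ) (h : E × 𝕌 → ℝ) : E ⊕ (E × 𝕌) → ℝ := Sum.elim g h

end Defs

/-!
The key is that density of `D(𝒜)` in `B_b(E)` forces `𝒜` to be bounded. For solutions of the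
martingale problems for `𝒜^u` started at points `x`, density gives `E[g(Y_t)] - g(x) → 0` as
`t → 0` for every bounded measurable `g`, uniformly in `(x, u)`. Along a sequence of starting
points, testing this with random signs `g` and averaging over the signs shows that
`P(Y_t ≠ x) → 0`, again uniformly in `(x, u)`. So for small `δ` the increment `E[f(Y_δ)] - f(x)`
is `δ 𝒜f(x, u)` up to `δ ‖𝒜f‖_∞ / 2`, whence `‖𝒜f‖_∞ ≤ C ‖f‖_∞`.

For a bounded generator, Gronwall's argument shows that the forward equation determines a flow of
functionals on `B_b(E)` by its initial value. By (A4), `X` and every solution `Y` controlled by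
`v̄(Y_t, t)` have the same forward equation, so their marginals agree. If `Z` is `ℱ_s`-measurable
and bounded with `E[Z | Y_s] = 0`, then `f ↦ E[Z f(Y_t)]`, `t ≥ s`, solves the forward equation
with initial value `0`; hence it vanishes, which is the Markov property of `Y`.
-/

section MartingaleProblem

open Filter Topology ProbabilityTheory

section OrthonormalSigns

/-- A family `r` of Rademacher-type variables: measurable signs `±1` that are pairwise orthogonal
in `L²(Q)`. Independence is not part of the notion. -/
structure IsOrthonormalSigns {Θ ι : Type*} [MeasurableSpace Θ] (Q : Measure Θ)
    (r : ι → Θ → ℝ) : Prop where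
  measurable : ∀ i, Measurable (r i)
  abs_eq_one : ∀ i θ, |r i θ| = 1
  orthogonal : ∀ i j, i ≠ j → ∫ θ, r i θ * r j θ ∂Q = 0

theorem exists_isOrthonormalSigns.{u} (ι : Type u) :
    ∃ (Θ : Type u) (_ : MeasurableSpace Θ) (Q : Measure Θ) (r : ι → Θ → ℝ),
      IsProbabilityMeasure Q ∧ IsOrthonormalSigns Q r := by
  let coin : Measure Bool := (PMF.uniformOfFintype Bool).toMeasure
  let sign : Bool → ℝ := fun b => if b then 1 else -1
  have measurable_sign : Measurable sign := .of_discrete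
  obtain ⟨Θ, _, Q, b, hb, hlaw, hindep, hQ⟩ := exists_iid ι coin
  have mean_zero (i : ι) : ∫ θ, sign (b i θ) ∂Q = 0 := by
    have := (hlaw i).integral_comp (f := sign) measurable_sign.aestronglyMeasurable
    rw [Function.comp_def] at this
    rw [this, PMF.integral_eq_sum]
    simp [sign]
  refine ⟨Θ, _, Q, fun i θ => sign (b i θ), hQ,
    fun i => measurable_sign.comp (hb i), fun i θ => ?_, fun i j hij => ?_⟩
  · cases h : b i θ <;> simp [sign]
  · have := ((hindep.indepFun hij).comp
      measurable_sign measurable_sign).integral_fun_mul_eq_mul_integral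
        (measurable_sign.comp (hb i)).aestronglyMeasurable
        (measurable_sign.comp (hb j)).aestronglyMeasurable
    simpa [mean_zero] using this

namespace IsOrthonormalSigns

variable {Θ ι E : Type*} [MeasurableSpace Θ] {Q : Measure Θ} {r : ι → Θ → ℝ}

theorem mul_self (hr : IsOrthonormalSigns Q r) (i : ι) (θ : Θ) : r i θ * r i θ = 1 := by
  rw [← abs_mul_abs_self, hr.abs_eq_one, one_mul]

theorem measurable_uncurry_comp [MeasurableSpace E] [Countable ι] [MeasurableSpace ι]
    [MeasurableSingletonClass ι] (hr : IsOrthonormalSigns Q r) {k : E → ι} (hk : Measurable k) :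
    Measurable fun p : Θ × E => r (k p.2) p.1 :=
  (measurable_from_prod_countable_left hr.measurable : Measurable fun p : Θ × ι => r p.2 p.1).comp
    (measurable_fst.prodMk (hk.comp measurable_snd))

theorem integral_mul_eq_indicator [IsProbabilityMeasure Q] (hr : IsOrthonormalSigns Q r)
    {k : E → ι} {x : E} (hkx : k ⁻¹' {k x} = {x}) (z : E) :
    ∫ θ, r (k x) θ * r (k z) θ ∂Q = ({x} : Set E).indicator 1 z := by
  rw [← hkx]
  by_cases hz : k x = k z
  · simp [hz, hr.mul_self]
  · simp [hr.orthogonal _ _ hz, Ne.symm hz]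

theorem integral_mul_integral_sub [MeasurableSpace E] [MeasurableSingletonClass E] [Countable ι]
    [MeasurableSpace ι] [MeasurableSingletonClass ι] [IsProbabilityMeasure Q]
    (hr : IsOrthonormalSigns Q r) {k : E → ι} (hk : Measurable k) {x : E} (hkx : k ⁻¹' {k x} = {x})
    (m : Measure E) [IsProbabilityMeasure m] :
    ∫ θ, r (k x) θ * (∫ z, r (k z) θ ∂m - r (k x) θ) ∂Q = m.real {x} - 1 := by
  have hint : Integrable (fun p : Θ × E => r (k x) p.1 * r (k p.2) p.1) (Q.prod m) :=
    .of_bound (((hr.measurable _).comp measurable_fst).mul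
      (hr.measurable_uncurry_comp hk)).aestronglyMeasurable 1
      (.of_forall fun p => by simp [hr.abs_eq_one])
  calc ∫ θ, r (k x) θ * (∫ z, r (k z) θ ∂m - r (k x) θ) ∂Q
      = ∫ θ, ((∫ z, r (k x) θ * r (k z) θ ∂m) - 1) ∂Q := by
        simp only [mul_sub, hr.mul_self, integral_const_mul]
    _ = (∫ θ, ∫ z, r (k x) θ * r (k z) θ ∂m ∂Q) - 1 := by
        rw [integral_sub hint.integral_prod_left (integrable_const _)]
        simp
    _ = m.real {x} - 1 := by
        rw [integral_integral_swap hint]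
        simp only [hr.integral_mul_eq_indicator hkx,
          integral_indicator_one (measurableSet_singleton x)]

end IsOrthonormalSigns

end OrthonormalSigns

section BddMeas

variable {E Ω : Type*} [MeasurableSpace E] {_ : MeasurableSpace Ω}

theorem bddMeas_indicator_one {B : Set E} (hB : MeasurableSet B) :
    BddMeas (B.indicator fun _ => (1 : ℝ)) :=
  ⟨measurable_const.indicator hB, 1, fun x => by by_cases hx : x ∈ B <;> simp [hx]⟩

theorem BddMeas.integrable_comp {P : Measure Ω} [IsFiniteMeasure P] {f : E → ℝ} (hf : BddMeas f)
    {X : Ω → E} (hX : Measurable X) : Integrable (fun ω => f (X ω)) P :=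
  let ⟨_, hC⟩ := hf.2
  .of_bound (hf.1.comp hX).aestronglyMeasurable _ (.of_forall fun _ => hC _)

theorem BddMeas.integrable {μ : Measure E} [IsFiniteMeasure μ] {f : E → ℝ} (hf : BddMeas f) :
    Integrable f μ :=
  hf.integrable_comp measurable_id

theorem abs_integral_le_of_forall_abs_le {P : Measure Ω} [IsProbabilityMeasure P] {f : Ω → ℝ}
    {M : ℝ} (hM : ∀ ω, |f ω| ≤ M) : |∫ ω, f ω ∂P| ≤ M := by
  simpa using norm_integral_le_of_norm_le_const (μ := P) (f := f) (.of_forall hM)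

theorem map_eq_map_of_forall_integral_eq {Ω' : Type*} {_ : MeasurableSpace Ω'} {P : Measure Ω}
    {P' : Measure Ω'} [IsFiniteMeasure P] [IsFiniteMeasure P'] {X : Ω → E} {Y : Ω' → E}
    (hX : Measurable X) (hY : Measurable Y)
    (h : ∀ f, BddMeas f → ∫ ω, f (X ω) ∂P = ∫ ω, f (Y ω) ∂P') : P.map X = P'.map Y := by
  ext B hB
  have hB' := bddMeas_indicator_one hB
  have h1 := h _ hB'
  rw [← integral_map hX.aemeasurable hB'.1.aestronglyMeasurable,
    ← integral_map hY.aemeasurable hB'.1.aestronglyMeasurable,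
    integral_indicator_const _ hB, integral_indicator_const _ hB] at h1
  simpa [measureReal_eq_measureReal_iff] using h1

/-- Density of `D` in `B_b(E)` for the supremum norm, as in (A3)(iii). -/
def DenseInBddMeas (D : Set (E → ℝ)) : Prop :=
  ∀ g : E → ℝ, BddMeas g → ∀ ε : ℝ, 0 < ε → ∃ f ∈ D, ∀ x, |f x - g x| ≤ ε

end BddMeas

section Concentration

variable {E : Type*} [MeasurableSpace E] [MeasurableSingletonClass E]

theorem exists_measurable_nat_preimage_eq_singleton (x : ℕ → E) :
    ∃ k : E → ℕ, Measurable k ∧ ∀ n, k ⁻¹' {k (x n)} = {x n} := by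
  classical
  let k : E → ℕ := fun z => if h : ∃ n, x n = z then Nat.find h + 1 else 0
  have x_of_k (z : E) (n : ℕ) (hz : k z = n + 1) : x n = z := by
    by_cases h : ∃ n, x n = z
    · simp only [k, dif_pos h, Nat.add_right_cancel_iff] at hz
      exact hz ▸ Nat.find_spec h
    · simp [k, h] at hz
  have k_pos (n : ℕ) : ∃ j, k (x n) = j + 1 :=
    have h : ∃ j, x j = x n := ⟨n, rfl⟩
    ⟨Nat.find h, dif_pos h⟩
  have fiber_zero : k ⁻¹' {0} = (range x)ᶜ := by
    ext z
    simp [k, dite_eq_right_iff]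
  refine ⟨k, measurable_to_countable' fun j => ?_, fun n => ?_⟩
  · cases j with
    | zero => exact fiber_zero ▸ (countable_range x).measurableSet.compl
    | succ j =>
      have : (k ⁻¹' {j + 1}).Subsingleton := fun z hz w hw =>
        (x_of_k z j hz).symm.trans (x_of_k w j hw)
      exact this.measurableSet
  · obtain ⟨j, hj⟩ := k_pos n
    refine Subset.antisymm (fun z hz => ?_) (by simp)
    exact (x_of_k z j (hz.trans hj)).symm.trans (x_of_k (x n) j hj)

-- Test the hypothesis on the random functions `r (k ·) θ` and average over `θ`.
theorem tendsto_measureReal_singleton_of_tendsto_integral_sub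
    {m : ℕ → Measure E} [∀ n, IsProbabilityMeasure (m n)] {x : ℕ → E}
    (h : ∀ g, BddMeas g → Tendsto (fun n => ∫ z, g z ∂m n - g (x n)) atTop (𝓝 0)) :
    Tendsto (fun n => (m n).real {x n}) atTop (𝓝 1) := by
  obtain ⟨k, hk, hkx⟩ := exists_measurable_nat_preimage_eq_singleton x
  obtain ⟨Θ, _, Q, r, _, hr⟩ := exists_isOrthonormalSigns ℕ
  have hrk := hr.measurable_uncurry_comp hk
  have average_tendsto :
      Tendsto (fun n => ∫ θ, r (k (x n)) θ * (∫ z, r (k z) θ ∂m n - r (k (x n)) θ) ∂Q)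
        atTop (𝓝 (∫ _, 0 ∂Q)) := by
    refine tendsto_integral_of_dominated_convergence (fun _ => 1 + 1) (fun n => ?_)
      (integrable_const _) (fun n => .of_forall fun θ => ?_) (.of_forall fun θ => ?_)
    · exact ((hr.measurable _).mul (hrk.stronglyMeasurable.integral_prod_right'.measurable.sub
        (hr.measurable _))).aestronglyMeasurable
    · rw [norm_mul, Real.norm_eq_abs, hr.abs_eq_one, one_mul]
      exact (norm_sub_le _ _).trans (add_le_add
        (abs_integral_le_of_forall_abs_le fun z => (hr.abs_eq_one _ θ).le)
        (hr.abs_eq_one _ θ).le)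
    · have hθ : BddMeas fun z => r (k z) θ :=
        ⟨hrk.comp measurable_prodMk_left, 1, fun z => (hr.abs_eq_one _ θ).le⟩
      refine squeeze_zero_norm (fun n => ?_) (tendsto_norm_zero.comp (h _ hθ))
      simp [hr.abs_eq_one]
  simpa [hr.integral_mul_integral_sub hk (hkx _)] using average_tendsto.add_const 1

end Concentration

section CondExp

variable {Ω : Type*} {m m0 : MeasurableSpace Ω} {P : Measure Ω} [IsFiniteMeasure P] {W Z : Ω → ℝ}
  {R : ℝ}

theorem integral_mul_condExp_of_ae_bdd (hm : m ≤ m0) (hZ : StronglyMeasurable[m] Z)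
    (hR : ∀ᵐ ω ∂P, |Z ω| ≤ R) (hW : Integrable W P) :
    ∫ ω, Z ω * (P[W | m]) ω ∂P = ∫ ω, Z ω * W ω ∂P :=
  (integral_congr_ae (condExp_stronglyMeasurable_mul_of_bound hm hZ hW R hR)).symm.trans
    (integral_condExp hm)

theorem integral_mul_eq_zero_of_condExp_ae_eq_zero {V : Ω → ℝ} (hm : m ≤ m0)
    (hV : StronglyMeasurable[m] V) (hR : ∀ᵐ ω ∂P, |V ω| ≤ R) (hZ : Integrable Z P)
    (hZm : P[Z | m] =ᵐ[P] 0) : ∫ ω, Z ω * V ω ∂P = 0 := by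
  simp only [mul_comm (Z _)]
  rw [← integral_mul_condExp_of_ae_bdd hm hV hR hZ]
  refine integral_eq_zero_of_ae ?_
  filter_upwards [hZm] with ω hω
  simp [hω]

-- The test variable is `Z = E[W | m₁] - E[W | m₂]`, for which `E[Z²] = E[Z W]`.
theorem condExp_ae_eq_condExp_of_forall_integral_mul_eq_zero {m₁ m₂ : MeasurableSpace Ω}
    (h₂₁ : m₂ ≤ m₁) (h₁ : m₁ ≤ m0) (hW : Integrable W P) (hR : ∀ᵐ ω ∂P, |W ω| ≤ R)
    (h : ∀ (Z : Ω → ℝ) (R' : ℝ), StronglyMeasurable[m₁] Z → (∀ᵐ ω ∂P, |Z ω| ≤ R') →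
      P[Z | m₂] =ᵐ[P] 0 → ∫ ω, Z ω * W ω ∂P = 0) :
    P[W | m₁] =ᵐ[P] P[W | m₂] := by
  have h₂ := h₂₁.trans h₁
  set Z : Ω → ℝ := P[W | m₁] - P[W | m₂] with hZ_def
  have hZ : StronglyMeasurable[m₁] Z :=
    stronglyMeasurable_condExp.sub (stronglyMeasurable_condExp.mono h₂₁)
  have hZ_int : Integrable Z P := integrable_condExp.sub integrable_condExp
  have condExp_bdd (m' : MeasurableSpace Ω) : ∀ᵐ ω ∂P, |(P[W | m']) ω| ≤ R :=
    ae_bdd_abs_condExp_of_ae_bdd_abs hR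
  have hZR : ∀ᵐ ω ∂P, |Z ω| ≤ R + R := by
    filter_upwards [condExp_bdd m₁, condExp_bdd m₂] with ω e₁ e₂
    exact (abs_sub _ _).trans (add_le_add e₁ e₂)
  have hZ_condExp : P[Z | m₂] =ᵐ[P] 0 := by
    filter_upwards [condExp_sub (m := m₂) (integrable_condExp (m := m₁) (f := W) (μ := P))
      (integrable_condExp (m := m₂)), condExp_condExp_of_le h₂₁ h₁ (f := W) (μ := P)] with ω e₁ e₂
    rw [e₁, Pi.sub_apply, e₂, condExp_of_stronglyMeasurable h₂ stronglyMeasurable_condExp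
      integrable_condExp, sub_self, Pi.zero_apply]
  have hZ_mul_int {V : Ω → ℝ} (hV : Integrable V P) : Integrable (fun ω => Z ω * V ω) P :=
    hV.bdd_mul (hZ.mono h₁).aestronglyMeasurable hZR
  have hZ_sq : ∫ ω, Z ω * Z ω ∂P = 0 :=
    calc ∫ ω, Z ω * Z ω ∂P
        = ∫ ω, Z ω * (P[W | m₁]) ω ∂P - ∫ ω, Z ω * (P[W | m₂]) ω ∂P := by
          rw [← integral_sub (hZ_mul_int integrable_condExp) (hZ_mul_int integrable_condExp)]
          simp only [hZ_def, Pi.sub_apply, mul_sub]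
      _ = 0 := by
          rw [integral_mul_condExp_of_ae_bdd h₁ hZ hZR hW, h Z _ hZ hZR hZ_condExp,
            integral_mul_eq_zero_of_condExp_ae_eq_zero h₂ stronglyMeasurable_condExp
              (condExp_bdd m₂) hZ_int hZ_condExp, sub_zero]
  filter_upwards [(integral_eq_zero_iff_of_nonneg (fun ω => mul_self_nonneg (Z ω))
    (hZ_mul_int hZ_int)).1 hZ_sq] with ω hω
  exact sub_eq_zero.1 (mul_self_eq_zero.1 hω)

end CondExp

section ProgressiveProcesses

variable {E 𝕌 Ω : Type*} [MeasurableSpace 𝕌] {m0 : MeasurableSpace Ω}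
  {P : Measure Ω} {ℱ : ℝ → MeasurableSpace Ω}

namespace ProgMeas

variable {β γ : Type*} [MeasurableSpace β] [MeasurableSpace γ] {Z : ℝ → Ω → β}

theorem measurable (hZ : ProgMeas ℱ Z) {t : ℝ} (ht : 0 ≤ t) : Measurable[ℱ t] (Z t) := by
  let _ : MeasurableSpace Ω := ℱ t
  have hZt : Measurable fun p : Icc (0 : ℝ) t × Ω => Z p.1 p.2 := hZ t ht
  exact hZt.comp (measurable_prodMk_left (x := (⟨t, ht, le_rfl⟩ : Icc (0 : ℝ) t)))

theorem measurable_projIcc (hZ : ProgMeas ℱ Z) (hle : ∀ t, ℱ t ≤ m0) {t : ℝ} (ht : 0 ≤ t) :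
    Measurable fun p : ℝ × Ω => Z (projIcc 0 t ht p.1) p.2 := by
  have hZt : Measurable fun p : Icc (0 : ℝ) t × Ω => Z p.1 p.2 :=
    (hZ t ht).mono (sup_le_sup le_rfl (MeasurableSpace.comap_mono (hle t))) le_rfl
  exact hZt.comp
    (((continuous_projIcc (h := ht)).measurable.comp measurable_fst).prodMk measurable_snd)

theorem comp_time (hZ : ProgMeas ℱ Z) {φ : β → ℝ → γ}
    (hφ : Measurable fun p : β × ℝ => φ p.1 p.2) : ProgMeas ℱ fun t ω => φ (Z t ω) t := by
  intro t ht
  let _ : MeasurableSpace Ω := ℱ t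
  have hZt : Measurable fun p : Icc (0 : ℝ) t × Ω => Z p.1 p.2 := hZ t ht
  exact hφ.comp (hZt.prodMk (measurable_subtype_coe.comp measurable_fst))

theorem integrable_uncurry [IsFiniteMeasure P] {G : ℝ → Ω → ℝ} (hG : ProgMeas ℱ G)
    (hle : ∀ t, ℱ t ≤ m0) {K : ℝ} (hK : ∀ r ω, |G r ω| ≤ K) (t : ℝ) :
    Integrable (Function.uncurry G) ((volume.restrict (Ioc 0 t)).prod P) := by
  obtain ht | ht := le_total t 0
  · simp [Ioc_eq_empty_of_le ht]
  refine .of_bound ?_ K (.of_forall fun p => hK p.1 p.2)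
  refine (hG.measurable_projIcc hle ht).aestronglyMeasurable.congr ?_
  have time_mem : ∀ᵐ p ∂(volume.restrict (Ioc 0 t)).prod P, p.1 ∈ Ioc 0 t :=
    Measure.quasiMeasurePreserving_fst.ae (ae_restrict_mem measurableSet_Ioc)
  filter_upwards [time_mem] with p hp
  rw [projIcc_of_mem ht ⟨hp.1.le, hp.2⟩, Function.uncurry_def]

end ProgMeas

theorem measurable_Abar {α : Type*} [MeasurableSpace α] [MeasurableSpace E]
    {A : (E → ℝ) → E × 𝕌 → ℝ} {f : E → ℝ} (hA : Measurable (A f)) {x : α → E} (hx : Measurable x)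
    {m : α → Measure 𝕌} (hm : Measurable m) (hprob : ∀ a, IsProbabilityMeasure (m a)) :
    Measurable fun a => Abar A f (x a) (m a) := by
  let κ : Kernel α 𝕌 := ⟨m, hm⟩
  have : IsMarkovKernel κ := ⟨hprob⟩
  have hA' : Measurable fun q : α × 𝕌 => A f (x q.1, q.2) :=
    hA.comp ((hx.comp measurable_fst).prodMk measurable_snd)
  exact (hA'.stronglyMeasurable.integral_kernel_prod_right' (κ := κ)).measurable

theorem abs_Abar_le {A : (E → ℝ) → E × 𝕌 → ℝ} {f : E → ℝ} {C : ℝ} (hC : ∀ p, |A f p| ≤ C)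
    (x : E) (m : Measure 𝕌) [IsProbabilityMeasure m] : |Abar A f x m| ≤ C :=
  abs_integral_le_of_forall_abs_le fun _ => hC _

theorem ProgMeas.abar [MeasurableSpace E] {A : (E → ℝ) → E × 𝕌 → ℝ} {f : E → ℝ}
    (hA : Measurable (A f)) {X : ℝ → Ω → E} (hX : ProgMeas ℱ X)
    {U : ℝ → Ω → Measure 𝕌} (hU : ProgMeas ℱ U) (hprob : ∀ t ω, IsProbabilityMeasure (U t ω)) :
    ProgMeas ℱ fun t ω => Abar A f (X t ω) (U t ω) := fun t ht =>
  let _ : MeasurableSpace Ω := ℱ t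
  measurable_Abar hA (hX t ht) (hU t ht) fun _ => hprob _ _

namespace IsMart

theorem integral_mul_eq [IsFiniteMeasure P] {M : ℝ → Ω → ℝ} (hM : IsMart P ℱ M)
    {s t : ℝ} (hle : ℱ s ≤ m0) (hs : 0 ≤ s) (hst : s ≤ t) {Z : Ω → ℝ}
    (hZ : StronglyMeasurable[ℱ s] Z) {R : ℝ} (hR : ∀ᵐ ω ∂P, |Z ω| ≤ R) :
    ∫ ω, Z ω * M t ω ∂P = ∫ ω, Z ω * M s ω ∂P := by
  rw [← integral_mul_condExp_of_ae_bdd hle hZ hR (hM.1 t (hs.trans hst))]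
  refine integral_congr_ae ?_
  filter_upwards [hM.2.2 s t hs hst] with ω hω
  rw [hω]

theorem integral_mul_sub_integral_mul [IsFiniteMeasure P] {V G : ℝ → Ω → ℝ}
    (hM : IsMart P ℱ fun t ω => V t ω - V 0 ω - ∫ r in Ioc 0 t, G r ω) (hle : ∀ t, ℱ t ≤ m0)
    (hV : ∀ t, 0 ≤ t → Integrable (V t) P) (hG : ProgMeas ℱ G) {K : ℝ}
    (hK : ∀ r ω, |G r ω| ≤ K) {s t : ℝ} (hs : 0 ≤ s) (hst : s ≤ t) {Z : Ω → ℝ}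
    (hZ : StronglyMeasurable[ℱ s] Z) {R : ℝ} (hR : ∀ᵐ ω ∂P, |Z ω| ≤ R) :
    ∫ ω, Z ω * V t ω ∂P - ∫ ω, Z ω * V s ω ∂P = ∫ r in Ioc s t, ∫ ω, Z ω * G r ω ∂P := by
  set M : ℝ → Ω → ℝ := fun t ω => V t ω - V 0 ω - ∫ r in Ioc 0 t, G r ω with hMdef
  have ht := hs.trans hst
  have hZ0 := (hZ.mono (hle s)).aestronglyMeasurable (μ := P)
  have hGt := hG.integrable_uncurry (P := P) hle hK t
  have hGst : Integrable (Function.uncurry G) ((volume.restrict (Ioc s t)).prod P) :=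
    hGt.mono_measure <|
      Measure.prod_mono (Measure.restrict_mono (Ioc_subset_Ioc_left hs) le_rfl) le_rfl
  have hZG : Integrable (Function.uncurry fun r ω => Z ω * G r ω)
      ((volume.restrict (Ioc s t)).prod P) :=
    hGst.bdd_mul hZ0.comp_snd (Measure.quasiMeasurePreserving_snd.ae hR)
  have int_Z_mul {W : Ω → ℝ} (hW : Integrable W P) : Integrable (fun ω => Z ω * W ω) P :=
    hW.bdd_mul hZ0 hR
  have increment : ∀ᵐ ω ∂P, Z ω * V t ω - Z ω * V s ω
      = Z ω * M t ω - Z ω * M s ω + ∫ r in Ioc s t, Z ω * G r ω := by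
    filter_upwards [hGt.prod_left_ae] with ω (hω : IntegrableOn (fun r => G r ω) (Ioc 0 t))
    have split := setIntegral_union (Ioc_disjoint_Ioc_of_le le_rfl) measurableSet_Ioc
      (hω.mono_set (Ioc_subset_Ioc_right hst)) (hω.mono_set (Ioc_subset_Ioc_left hs))
    rw [Ioc_union_Ioc_eq_Ioc hs hst] at split
    simp only [integral_const_mul, hMdef, split]
    ring
  calc ∫ ω, Z ω * V t ω ∂P - ∫ ω, Z ω * V s ω ∂P
      = ∫ ω, (Z ω * M t ω - Z ω * M s ω + ∫ r in Ioc s t, Z ω * G r ω) ∂P := by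
        rw [← integral_sub (int_Z_mul (hV t ht)) (int_Z_mul (hV s hs)),
          integral_congr_ae increment]
    _ = ∫ ω, Z ω * M t ω ∂P - ∫ ω, Z ω * M s ω ∂P + ∫ r in Ioc s t, ∫ ω, Z ω * G r ω ∂P := by
        have hMt := int_Z_mul (hM.1 t ht)
        have hMs := int_Z_mul (hM.1 s hs)
        have hZG_time : Integrable (fun ω => ∫ r in Ioc s t, Z ω * G r ω) P :=
          hZG.integral_prod_right
        rw [integral_integral_swap hZG, integral_add (hMt.sub' hMs) hZG_time,
          integral_sub hMt hMs]
    _ = ∫ r in Ioc s t, ∫ ω, Z ω * G r ω ∂P := by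
        rw [hM.integral_mul_eq (hle s) hs hst hZ hR, sub_self, zero_add]

end IsMart

end ProgressiveProcesses

section Solutions

variable {E 𝕌 Ω : Type*} [MeasurableSpace E] [MeasurableSpace 𝕌] {m0 : MeasurableSpace Ω}
  {P : Measure Ω} {ℱ : ℝ → MeasurableSpace Ω} {D : Set (E → ℝ)} {A : (E → ℝ) → E × 𝕌 → ℝ}
  {ν : Measure E} {X : ℝ → Ω → E}

theorem IsMPSol.isRelaxedSol {L : (E → ℝ) → ℝ → E → ℝ} (hX : IsMPSol D L ν P ℱ X)
    {vbar : E → ℝ → Measure 𝕌} (hv : Measurable fun p : E × ℝ => vbar p.1 p.2)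
    (hvp : ∀ x s, IsProbabilityMeasure (vbar x s))
    (hL : ∀ f ∈ D, ∀ s y, L f s y = Abar A f y (vbar y s)) :
    IsRelaxedSol D A ν P ℱ X fun t ω => vbar (X t ω) t where
  __ := hX
  progU := hX.progX.comp_time hv
  probU _ _ := hvp _ _
  mart f hf := by simpa only [hL f hf] using hX.mart f hf

namespace IsRelaxedSol

variable {U : ℝ → Ω → Measure 𝕌} {f : E → ℝ}

theorem measurable (hX : IsRelaxedSol D A ν P ℱ X U) {t : ℝ} (ht : 0 ≤ t) : Measurable (X t) :=
  (hX.progX.measurable ht).mono (hX.le t) le_rfl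

theorem integral_mul_sub_integral_mul (hX : IsRelaxedSol D A ν P ℱ X U) (hfD : f ∈ D)
    (hf : BddMeas f) (hAf : BddMeas (A f)) {s t : ℝ} (hs : 0 ≤ s) (hst : s ≤ t) {Z : Ω → ℝ}
    (hZ : StronglyMeasurable[ℱ s] Z) {R : ℝ} (hR : ∀ᵐ ω ∂P, |Z ω| ≤ R) :
    ∫ ω, Z ω * f (X t ω) ∂P - ∫ ω, Z ω * f (X s ω) ∂P
      = ∫ r in Ioc s t, ∫ ω, Z ω * Abar A f (X r ω) (U r ω) ∂P := by
  have := hX.prob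
  have := hX.probU
  obtain ⟨K, hK⟩ := hAf.2
  exact (hX.mart f hfD).integral_mul_sub_integral_mul hX.le
    (fun t ht => hf.integrable_comp (hX.measurable ht)) (hX.progX.abar hAf.1 hX.progU hX.probU)
    (fun r ω => abs_Abar_le hK _ _) hs hst hZ hR

theorem integral_sub_integral (hX : IsRelaxedSol D A ν P ℱ X U) (hfD : f ∈ D)
    (hf : BddMeas f) (hAf : BddMeas (A f)) {t : ℝ} (ht : 0 ≤ t) :
    ∫ ω, f (X t ω) ∂P - ∫ x, f x ∂ν = ∫ r in Ioc 0 t, ∫ ω, Abar A f (X r ω) (U r ω) ∂P := by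
  rw [← hX.init, integral_map (hX.measurable le_rfl).aemeasurable hf.1.aestronglyMeasurable]
  simpa using hX.integral_mul_sub_integral_mul hfD hf hAf le_rfl ht (Z := fun _ => 1)
    stronglyMeasurable_const (R := 1) (by simp)

theorem integrableOn_integral_abar (hX : IsRelaxedSol D A ν P ℱ X U) (hAf : BddMeas (A f))
    (t : ℝ) : IntegrableOn (fun r => ∫ ω, Abar A f (X r ω) (U r ω) ∂P) (Ioc 0 t) := by
  have := hX.prob
  have := hX.probU
  obtain ⟨K, hK⟩ := hAf.2
  exact ((hX.progX.abar hAf.1 hX.progU hX.probU).integrable_uncurry hX.le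
    (fun r ω => abs_Abar_le hK _ _) t).integral_prod_left

end IsRelaxedSol

end Solutions

section GeneratorBound

variable {E : Type*} [MeasurableSpace E] {D : Set (E → ℝ)}

/-- The forward (Fokker–Planck) equation of the generator `L` for the flow of laws `μ` started at
`δ_x`, tested against the functions of `D`. -/
structure IsForwardSol (D : Set (E → ℝ)) (L : (E → ℝ) → E → ℝ) (x : E) (μ : ℝ → Measure E) :
    Prop where
  prob : ∀ t, 0 ≤ t → IsProbabilityMeasure (μ t)
  integrableOn : ∀ f ∈ D, ∀ t, 0 ≤ t → IntegrableOn (fun r => ∫ y, L f y ∂μ r) (Ioc 0 t)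
  eq : ∀ f ∈ D, ∀ t, 0 ≤ t → ∫ y, f y ∂μ t - f x = ∫ r in Ioc 0 t, ∫ y, L f y ∂μ r

theorem IsMPSol.isForwardSol_map {Ω : Type*} {_ : MeasurableSpace Ω} {P : Measure Ω}
    {ℱ : ℝ → MeasurableSpace Ω} {L : (E → ℝ) → E → ℝ} {x : E} {Y : ℝ → Ω → E}
    (hDb : ∀ f ∈ D, BddMeas f) (hLb : ∀ f ∈ D, BddMeas (L f))
    (hY : IsMPSol D (fun f _ => L f) (Measure.dirac x) P ℱ Y) :
    IsForwardSol D L x fun t => P.map (Y t) := by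
  have := hY.prob
  let A : (E → ℝ) → E × Unit → ℝ := fun f p => L f p.1
  have hAb (f) (hf : f ∈ D) : BddMeas (A f) :=
    ⟨(hLb f hf).1.comp measurable_fst, (hLb f hf).2.imp fun _ hC _ => hC _⟩
  have hY' : IsRelaxedSol D A (Measure.dirac x) P ℱ Y fun _ _ => Measure.dirac () :=
    hY.isRelaxedSol (vbar := fun _ _ => Measure.dirac ()) measurable_const inferInstance
      fun _ _ _ _ => by simp [Abar, A]
  have integral_law {h : E → ℝ} (hh : BddMeas h) {r : ℝ} (hr : 0 ≤ r) :
      ∫ y, h y ∂P.map (Y r) = ∫ ω, h (Y r ω) ∂P :=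
    integral_map (hY'.measurable hr).aemeasurable hh.1.aestronglyMeasurable
  have integral_law_eqOn (f) (hf : f ∈ D) (t : ℝ) :
      EqOn (fun r => ∫ ω, Abar A f (Y r ω) (Measure.dirac ()) ∂P)
        (fun r => ∫ y, L f y ∂P.map (Y r)) (Ioc 0 t) := fun r hr => by
    simp [integral_law (hLb f hf) hr.1.le, Abar, A]
  refine ⟨fun t ht => Measure.isProbabilityMeasure_map (hY'.measurable ht).aemeasurable,
    fun f hf t _ => ?_, fun f hf t ht => ?_⟩
  · exact (hY'.integrableOn_integral_abar (hAb f hf) t).congr_fun (integral_law_eqOn f hf t)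
      measurableSet_Ioc
  · rw [integral_law (hDb f hf) ht,
      ← setIntegral_congr_fun measurableSet_Ioc (integral_law_eqOn f hf t),
      ← hY'.integral_sub_integral hf (hDb f hf) (hAb f hf) ht,
      integral_dirac' _ _ (hDb f hf).1.stronglyMeasurable]

theorem abs_integral_sub_le_mul_measureReal_singleton_compl [MeasurableSingletonClass E]
    {m : Measure E} [IsProbabilityMeasure m] {g : E → ℝ} (hg : Measurable g) {S : ℝ}
    (hS : ∀ y, |g y| ≤ S) (x : E) : |∫ y, g y ∂m - g x| ≤ 2 * S * m.real {x}ᶜ := by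
  have hgm : BddMeas g := ⟨hg, S, hS⟩
  calc |∫ y, g y ∂m - g x| = |∫ y in {x}ᶜ, (g y - g x) ∂m| := by
        rw [setIntegral_eq_integral_of_forall_compl_eq_zero (by simp),
          integral_sub hgm.integrable (integrable_const _)]
        simp
    _ ≤ 2 * S * m.real {x}ᶜ := by
        have oscillation (y : E) : ‖g y - g x‖ ≤ 2 * S :=
          (norm_sub_le _ _).trans ((add_le_add (hS y) (hS x)).trans_eq (two_mul S).symm)
        exact norm_setIntegral_le_of_norm_le_const (measure_lt_top m _) fun y _ => oscillation y

namespace IsForwardSol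

variable {L : (E → ℝ) → E → ℝ} {x : E} {μ : ℝ → Measure E} {f : E → ℝ}

theorem abs_integral_sub_le (hμ : IsForwardSol D L x μ) (hf : f ∈ D) {K : ℝ}
    (hK : ∀ y, |L f y| ≤ K) {t : ℝ} (ht : 0 ≤ t) : |∫ y, f y ∂μ t - f x| ≤ K * t := by
  rw [hμ.eq f hf t ht]
  have := norm_setIntegral_le_of_norm_le_const (μ := volume) (s := Ioc 0 t) (C := K)
    (f := fun r => ∫ y, L f y ∂μ r) measure_Ioc_lt_top fun r hr =>
      have := hμ.prob r hr.1.le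
      abs_integral_le_of_forall_abs_le hK
  simpa [ht] using this

theorem mul_abs_le [MeasurableSingletonClass E] (hμ : IsForwardSol D L x μ) (hf : f ∈ D)
    (hLf : Measurable (L f)) {M S δ ε : ℝ} (hM : ∀ y, |f y| ≤ M) (hS : ∀ y, |L f y| ≤ S)
    (hδ : 0 ≤ δ) (hε : ∀ t, 0 < t → t ≤ δ → (μ t).real {x}ᶜ ≤ ε) :
    δ * |L f x| ≤ 2 * M + 2 * S * ε * δ := by
  have := hμ.prob δ hδ
  have increment : |∫ y, f y ∂μ δ - f x| ≤ 2 * M :=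
    (abs_sub _ _).trans ((add_le_add (abs_integral_le_of_forall_abs_le hM) (hM x)).trans_eq
      (two_mul M).symm)
  have remainder : |∫ r in Ioc 0 δ, (∫ y, L f y ∂μ r - L f x)| ≤ 2 * S * ε * δ := by
    have := norm_setIntegral_le_of_norm_le_const (μ := volume) (s := Ioc 0 δ)
      (f := fun r => ∫ y, L f y ∂μ r - L f x) (C := 2 * S * ε) measure_Ioc_lt_top fun r hr => by
        have := hμ.prob r hr.1.le
        have hS0 : 0 ≤ S := (abs_nonneg _).trans (hS x)
        exact (abs_integral_sub_le_mul_measureReal_singleton_compl hLf hS x).trans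
          (mul_le_mul_of_nonneg_left (hε r hr.1 hr.2) (by positivity))
    simpa [hδ] using this
  have expansion : δ * L f x
      = (∫ y, f y ∂μ δ - f x) - ∫ r in Ioc 0 δ, (∫ y, L f y ∂μ r - L f x) := by
    rw [integral_sub (hμ.integrableOn f hf δ hδ) (integrable_const _), ← hμ.eq f hf δ hδ]
    simp [hδ]
  rw [← abs_of_nonneg hδ, ← abs_mul, expansion, abs_of_nonneg hδ]
  exact (abs_sub _ _).trans (add_le_add increment remainder)

theorem tendsto_integral_sub {L : ℕ → (E → ℝ) → E → ℝ} {x : ℕ → E} {μ : ℕ → ℝ → Measure E}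
    (hμ : ∀ n, IsForwardSol D (L n) (x n) (μ n)) (hD : DenseInBddMeas D)
    (hDb : ∀ f ∈ D, BddMeas f) (hL : ∀ f ∈ D, ∃ K, ∀ n y, |L n f y| ≤ K) {t : ℕ → ℝ}
    (ht : ∀ n, 0 ≤ t n) (ht0 : Tendsto t atTop (𝓝 0)) {g : E → ℝ} (hg : BddMeas g) :
    Tendsto (fun n => ∫ y, g y ∂μ n (t n) - g (x n)) atTop (𝓝 0) := by
  refine Metric.tendsto_nhds.2 fun ε hε => ?_
  obtain ⟨f, hf, hfg⟩ := hD g hg (ε / 4) (by positivity)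
  obtain ⟨K, hK⟩ := hL f hf
  have hKt : Tendsto (fun n => K * t n) atTop (𝓝 0) := by simpa using ht0.const_mul K
  filter_upwards [hKt.eventually_lt_const (half_pos hε)] with n hn
  have := (hμ n).prob _ (ht n)
  have generator_part := (hμ n).abs_integral_sub_le hf (hK n) (ht n)
  have law_part : |∫ y, f y ∂μ n (t n) - ∫ y, g y ∂μ n (t n)| ≤ ε / 4 := by
    rw [← integral_sub (hDb f hf).integrable hg.integrable]
    exact abs_integral_le_of_forall_abs_le hfg
  rw [Real.dist_0_eq_abs]
  grind [abs_le.1 law_part, abs_le.1 (hfg (x n)), abs_le.1 generator_part]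

end IsForwardSol

theorem exists_forall_measureReal_singleton_compl_le [MeasurableSingletonClass E] {ι : Type*}
    {L : ι → (E → ℝ) → E → ℝ} {x : ι → E} {μ : ι → ℝ → Measure E}
    (hμ : ∀ i, IsForwardSol D (L i) (x i) (μ i)) (hD : DenseInBddMeas D)
    (hDb : ∀ f ∈ D, BddMeas f) (hL : ∀ f ∈ D, ∃ K, ∀ i y, |L i f y| ≤ K) {ε : ℝ} (hε : 0 < ε) :
    ∃ δ > 0, ∀ i t, 0 < t → t ≤ δ → (μ i t).real {x i}ᶜ ≤ ε := by
  by_contra! hcon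
  choose i t ht_pos ht_le hbad using fun n : ℕ => hcon (1 / ((n : ℝ) + 1)) (by positivity)
  have (n : ℕ) : IsProbabilityMeasure (μ (i n) (t n)) := (hμ _).prob _ (ht_pos n).le
  have ht0 : Tendsto t atTop (𝓝 0) :=
    squeeze_zero (fun n => (ht_pos n).le) ht_le tendsto_one_div_add_atTop_nhds_zero_nat
  have concentration := tendsto_measureReal_singleton_of_tendsto_integral_sub fun g hg =>
    IsForwardSol.tendsto_integral_sub (fun n => hμ (i n)) hD hDb
      (fun f hf => (hL f hf).imp fun K hK n => hK (i n)) (fun n => (ht_pos n).le) ht0 hg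
  obtain ⟨n, hn⟩ := (concentration.eventually_const_lt (sub_lt_self 1 hε)).exists
  have hcompl := probReal_compl_eq_one_sub (μ := μ (i n) (t n)) (measurableSet_singleton (x (i n)))
  linarith [hbad n]

theorem exists_forall_abs_le_mul [MeasurableSingletonClass E] {𝕌 : Type*} [MeasurableSpace 𝕌]
    {A : (E → ℝ) → E × 𝕌 → ℝ} (hD : DenseInBddMeas D) (hDb : ∀ f ∈ D, BddMeas f)
    (hAb : ∀ f ∈ D, BddMeas (A f))
    (hex : ∀ (u : 𝕌) (x : E), ∃ μ, IsForwardSol D (fun f y => A f (y, u)) x μ) :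
    ∃ C : ℝ, ∀ f ∈ D, ∀ M : ℝ, (∀ y, |f y| ≤ M) → ∀ p, |A f p| ≤ C * M := by
  choose μ hμ using fun p : E × 𝕌 => hex p.2 p.1
  obtain ⟨δ, hδ, hsmall⟩ := exists_forall_measureReal_singleton_compl_le hμ hD hDb
    (fun f hf => (hAb f hf).2.imp fun K hK p y => hK (y, p.2)) (ε := 1 / 4) (by norm_num)
  refine ⟨4 / δ, fun f hf M hM p => ?_⟩
  obtain ⟨K, hK⟩ := (hAb f hf).2
  set S := ⨆ q, |A f q|
  have hS (q : E × 𝕌) : |A f q| ≤ S := le_ciSup ⟨K, forall_mem_range.2 hK⟩ q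
  have absorb (q : E × 𝕌) : |A f q| ≤ 2 / δ * M + S / 2 := by
    have := (hμ q).mul_abs_le hf ((hAb f hf).1.comp measurable_prodMk_right) hM
      (fun y => hS (y, q.2)) hδ.le (hsmall q)
    rw [← mul_le_mul_iff_right₀ hδ]
    refine this.trans_eq ?_
    field_simp
    ring
  have : Nonempty (E × 𝕌) := ⟨p⟩
  have hS_le : S ≤ 2 / δ * M + S / 2 := ciSup_le absorb
  calc |A f p| ≤ S := hS p
    _ ≤ 2 * (2 / δ * M) := by linarith
    _ = 4 / δ * M := by ring

end GeneratorBound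

section Gronwall

variable {E : Type*} [MeasurableSpace E] {D : Set (E → ℝ)}

/-- An additive functional on `B_b(E)` of norm at most `K`. Additivity is stated for differences,
which is the form the approximation arguments need. -/
structure IsBddFunctional (K : ℝ) (ℓ : (E → ℝ) → ℝ) : Prop where
  map_sub : ∀ f g, BddMeas f → BddMeas g → ℓ (fun x => f x - g x) = ℓ f - ℓ g
  abs_apply_le : ∀ f M, BddMeas f → (∀ x, |f x| ≤ M) → |ℓ f| ≤ K * M

theorem BddMeas.sub {f g : E → ℝ} (hf : BddMeas f) (hg : BddMeas g) :
    BddMeas fun x => f x - g x :=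
  let ⟨_, hC⟩ := hf.2
  let ⟨_, hC'⟩ := hg.2
  ⟨hf.1.sub hg.1, _, fun x => (abs_sub _ _).trans (add_le_add (hC x) (hC' x))⟩

theorem IsBddFunctional.of_dense {K c : ℝ} {ℓ : (E → ℝ) → ℝ} (hℓ : IsBddFunctional K ℓ)
    (hD : DenseInBddMeas D) (hDb : ∀ f ∈ D, BddMeas f)
    (h : ∀ f ∈ D, ∀ M : ℝ, (∀ x, |f x| ≤ M) → |ℓ f| ≤ c * M) : IsBddFunctional c ℓ := by
  refine ⟨hℓ.map_sub, fun g M hg hM => ?_⟩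
  have hlim : Tendsto (fun ε : ℝ => c * (M + ε) + K * ε) (𝓝[>] 0) (𝓝 (c * M)) := by
    refine (Continuous.tendsto' ?_ 0 _ (by simp)).mono_left nhdsWithin_le_nhds
    fun_prop
  refine ge_of_tendsto hlim (eventually_mem_nhdsWithin.mono fun ε (hε : 0 < ε) => ?_)
  obtain ⟨f, hf, hfg⟩ := hD g hg ε hε
  have hfM (x : E) : |f x| ≤ M + ε := by
    grind [abs_le.1 (hM x), abs_le.1 (hfg x)]
  have hdiff := hℓ.abs_apply_le _ ε ((hDb f hf).sub hg) hfg
  rw [hℓ.map_sub f g (hDb f hf) hg] at hdiff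
  grind [h f hf (M + ε) hfM]

variable {K C s : ℝ} {Λ : ℝ → (E → ℝ) → ℝ} {L : ℝ → (E → ℝ) → E → ℝ}

theorem isBddFunctional_pow_div_factorial (hD : DenseInBddMeas D) (hDb : ∀ f ∈ D, BddMeas f)
    (hΛ : ∀ r, s ≤ r → IsBddFunctional K (Λ r)) (hL : ∀ f ∈ D, ∀ r, BddMeas (L r f))
    (hLC : ∀ f ∈ D, ∀ M : ℝ, (∀ x, |f x| ≤ M) → ∀ r x, |L r f x| ≤ C * M)
    (heq : ∀ f ∈ D, ∀ t, s ≤ t → Λ t f = ∫ r in Ioc s t, Λ r (L r f)) (n : ℕ) (t : ℝ)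
    (hst : s ≤ t) : IsBddFunctional (K * ((C * (t - s)) ^ n / n.factorial)) (Λ t) := by
  induction n generalizing t with
  | zero => simpa using hΛ t hst
  | succ n ih =>
    refine (hΛ t hst).of_dense hD hDb fun f hf M hM => ?_
    have iterated_bound : ∫ r in s..t, K * ((C * (r - s)) ^ n / n.factorial) * (C * M)
        = K * ((C * (t - s)) ^ (n + 1) / (n + 1).factorial) * M := by
      have hn : ((n : ℝ) + 1) ≠ 0 := by positivity
      simp only [mul_pow, intervalIntegral.integral_mul_const, intervalIntegral.integral_const_mul,
        intervalIntegral.integral_div, intervalIntegral.integral_comp_sub_right (· ^ n) s,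
        integral_pow, Nat.factorial_succ, sub_self, zero_pow n.succ_ne_zero, sub_zero]
      push_cast
      field_simp
      ring
    rw [heq f hf t hst, ← iterated_bound, intervalIntegral.integral_of_le hst,
      ← Real.norm_eq_abs]
    have hcont : Continuous fun r : ℝ => K * ((C * (r - s)) ^ n / n.factorial) * (C * M) := by
      fun_prop
    refine norm_integral_le_of_norm_le hcont.integrableOn_Ioc ?_
    filter_upwards [ae_restrict_mem measurableSet_Ioc] with r hr
    exact (ih r hr.1.le).abs_apply_le _ _ (hL f hf r) (hLC f hf M hM r)

theorem IsBddFunctional.eq_zero_of_eq_setIntegral (hD : DenseInBddMeas D) (hDb : ∀ f ∈ D, BddMeas f)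
    (hΛ : ∀ r, s ≤ r → IsBddFunctional K (Λ r)) (hL : ∀ f ∈ D, ∀ r, BddMeas (L r f))
    (hLC : ∀ f ∈ D, ∀ M : ℝ, (∀ x, |f x| ≤ M) → ∀ r x, |L r f x| ≤ C * M)
    (heq : ∀ f ∈ D, ∀ t, s ≤ t → Λ t f = ∫ r in Ioc s t, Λ r (L r f)) {t : ℝ} (hst : s ≤ t)
    {f : E → ℝ} (hf : BddMeas f) : Λ t f = 0 := by
  obtain ⟨M, hM⟩ := hf.2
  have hlim : Tendsto (fun n : ℕ => K * ((C * (t - s)) ^ n / n.factorial) * M) atTop (𝓝 0) := by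
    simpa using ((FloorSemiring.tendsto_pow_div_factorial_atTop _).const_mul K).mul_const M
  exact abs_nonpos_iff.1 <| ge_of_tendsto' hlim fun n =>
    (isBddFunctional_pow_div_factorial hD hDb hΛ hL hLC heq n t hst).abs_apply_le f M hf hM

end Gronwall

section Mimicking

variable {E 𝕌 Ω Ω' : Type*} [MeasurableSpace E] [MeasurableSpace 𝕌] {m0 : MeasurableSpace Ω}
  {m0' : MeasurableSpace Ω'} {P : Measure Ω} {P' : Measure Ω'} {ℱ : ℝ → MeasurableSpace Ω}
  {ℱ' : ℝ → MeasurableSpace Ω'} {D : Set (E → ℝ)} {A : (E → ℝ) → E × 𝕌 → ℝ} {ν : Measure E}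
  {X : ℝ → Ω → E} {Y : ℝ → Ω' → E} {U : ℝ → Ω → Measure 𝕌} {vbar : E → ℝ → Measure 𝕌}
  {f : E → ℝ} {C : ℝ}

theorem isBddFunctional_integral_mul [IsProbabilityMeasure P] {Z : Ω → ℝ} {R : ℝ}
    (hZ : AEStronglyMeasurable Z P) (hR : ∀ᵐ ω ∂P, |Z ω| ≤ R) {x : Ω → E} (hx : Measurable x) :
    IsBddFunctional R fun f => ∫ ω, Z ω * f (x ω) ∂P where
  map_sub f g hf hg := by
    simp only [mul_sub]
    exact integral_sub ((hf.integrable_comp hx).bdd_mul hZ hR)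
      ((hg.integrable_comp hx).bdd_mul hZ hR)
  abs_apply_le f M _ hM := by
    have hbound : ∀ᵐ ω ∂P, ‖Z ω * f (x ω)‖ ≤ R * M := hR.mono fun ω hω => by
      rw [norm_mul]
      exact mul_le_mul hω (hM _) (norm_nonneg _) ((abs_nonneg _).trans hω)
    simpa using norm_integral_le_of_norm_le_const hbound

theorem isBddFunctional_integral [IsProbabilityMeasure P] {x : Ω → E} (hx : Measurable x) :
    IsBddFunctional 1 fun f => ∫ ω, f (x ω) ∂P := by
  simpa using isBddFunctional_integral_mul (P := P) (Z := fun _ => 1) (R := 1)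
    aestronglyMeasurable_const (by simp) hx

theorem IsBddFunctional.sub {K K' : ℝ} {ℓ ℓ' : (E → ℝ) → ℝ} (hℓ : IsBddFunctional K ℓ)
    (hℓ' : IsBddFunctional K' ℓ') : IsBddFunctional (K + K') fun f => ℓ f - ℓ' f where
  map_sub f g hf hg := by rw [hℓ.map_sub f g hf hg, hℓ'.map_sub f g hf hg]; ring
  abs_apply_le f M hf hM := by
    rw [add_mul]
    exact (abs_sub _ _).trans (add_le_add (hℓ.abs_apply_le f M hf hM) (hℓ'.abs_apply_le f M hf hM))

theorem bddMeas_Abar_comp (hAf : BddMeas (A f)) (hv : Measurable fun p : E × ℝ => vbar p.1 p.2)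
    (hvp : ∀ x s, IsProbabilityMeasure (vbar x s)) (r : ℝ) :
    BddMeas fun y => Abar A f y (vbar y r) :=
  let ⟨K, hK⟩ := hAf.2
  ⟨measurable_Abar hAf.1 measurable_id (hv.comp (measurable_id.prodMk measurable_const))
    fun _ => hvp _ _, K, fun y => have := hvp y r; abs_Abar_le hK y _⟩

namespace IsRelaxedSol

theorem integral_abar_eq (hX : IsRelaxedSol D A ν P ℱ X U) {t : ℝ} (ht : 0 ≤ t)
    (hcond : P[fun ω => Abar A f (X t ω) (U t ω) | MeasurableSpace.comap (X t) inferInstance]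
      =ᵐ[P] fun ω => Abar A f (X t ω) (vbar (X t ω) t)) :
    ∫ ω, Abar A f (X t ω) (U t ω) ∂P = ∫ ω, Abar A f (X t ω) (vbar (X t ω) t) ∂P := by
  have := hX.prob
  rw [← integral_condExp (hX.measurable ht).comap_le]
  exact integral_congr_ae hcond

theorem map_eq_of_condExp (hD : DenseInBddMeas D) (hDb : ∀ f ∈ D, BddMeas f)
    (hAb : ∀ f ∈ D, BddMeas (A f))
    (hAC : ∀ f ∈ D, ∀ M : ℝ, (∀ y, |f y| ≤ M) → ∀ p, |A f p| ≤ C * M)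
    (hv : Measurable fun p : E × ℝ => vbar p.1 p.2) (hvp : ∀ x s, IsProbabilityMeasure (vbar x s))
    (hX : IsRelaxedSol D A ν P ℱ X U)
    (hcond : ∀ f ∈ D, ∀ s : ℝ, 0 ≤ s →
      P[fun ω => Abar A f (X s ω) (U s ω) | MeasurableSpace.comap (X s) inferInstance]
        =ᵐ[P] fun ω => Abar A f (X s ω) (vbar (X s ω) s))
    (hY : IsRelaxedSol D A ν P' ℱ' Y fun t ω => vbar (Y t ω) t) {t : ℝ} (ht : 0 ≤ t) :
    P'.map (Y t) = P.map (X t) := by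
  have := hX.prob
  have := hY.prob
  refine map_eq_map_of_forall_integral_eq (hY.measurable ht) (hX.measurable ht) fun g hg =>
    sub_eq_zero.1 ?_
  refine IsBddFunctional.eq_zero_of_eq_setIntegral (K := 1 + 1) (C := C) (s := 0)
    (Λ := fun r f => ∫ ω, f (Y r ω) ∂P' - ∫ ω, f (X r ω) ∂P)
    (L := fun r f y => Abar A f y (vbar y r)) hD hDb
    (fun r hr => (isBddFunctional_integral (hY.measurable hr)).sub
      (isBddFunctional_integral (hX.measurable hr)))
    (fun f hf => bddMeas_Abar_comp (hAb f hf) hv hvp)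
    (fun f hf M hM r y => have := hvp y r; abs_Abar_le (hAC f hf M hM) y _)
    (fun f hf t ht => ?_) ht hg
  have hAf := hAb f hf
  calc ∫ ω, f (Y t ω) ∂P' - ∫ ω, f (X t ω) ∂P
      = (∫ ω, f (Y t ω) ∂P' - ∫ x, f x ∂ν) - (∫ ω, f (X t ω) ∂P - ∫ x, f x ∂ν) := by ring
    _ = ∫ r in Ioc 0 t, (∫ ω, Abar A f (Y r ω) (vbar (Y r ω) r) ∂P'
          - ∫ ω, Abar A f (X r ω) (U r ω) ∂P) := by
        rw [hY.integral_sub_integral hf (hDb f hf) hAf ht,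
          hX.integral_sub_integral hf (hDb f hf) hAf ht,
          integral_sub (hY.integrableOn_integral_abar hAf t) (hX.integrableOn_integral_abar hAf t)]
    _ = ∫ r in Ioc 0 t, (∫ ω, Abar A f (Y r ω) (vbar (Y r ω) r) ∂P'
          - ∫ ω, Abar A f (X r ω) (vbar (X r ω) r) ∂P) :=
        setIntegral_congr_fun measurableSet_Ioc fun r hr => by
          rw [hX.integral_abar_eq hr.1.le (hcond f hf r hr.1.le)]

theorem integral_mul_eq_zero (hD : DenseInBddMeas D) (hDb : ∀ f ∈ D, BddMeas f)
    (hAb : ∀ f ∈ D, BddMeas (A f))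
    (hAC : ∀ f ∈ D, ∀ M : ℝ, (∀ y, |f y| ≤ M) → ∀ p, |A f p| ≤ C * M)
    (hv : Measurable fun p : E × ℝ => vbar p.1 p.2) (hvp : ∀ x s, IsProbabilityMeasure (vbar x s))
    (hX : IsRelaxedSol D A ν P ℱ X fun t ω => vbar (X t ω) t) {s t : ℝ} (hs : 0 ≤ s)
    (hst : s ≤ t) {Z : Ω → ℝ} {R : ℝ} (hZ : StronglyMeasurable[ℱ s] Z)
    (hR : ∀ᵐ ω ∂P, |Z ω| ≤ R) (h : ∀ f, BddMeas f → ∫ ω, Z ω * f (X s ω) ∂P = 0)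
    (hf : BddMeas f) : ∫ ω, Z ω * f (X t ω) ∂P = 0 := by
  have := hX.prob
  refine IsBddFunctional.eq_zero_of_eq_setIntegral (K := R) (C := C) (s := s)
    (Λ := fun r f => ∫ ω, Z ω * f (X r ω) ∂P) (L := fun r f y => Abar A f y (vbar y r)) hD hDb
    (fun r hr => isBddFunctional_integral_mul (hZ.mono (hX.le s)).aestronglyMeasurable hR
      (hX.measurable (hs.trans hr)))
    (fun f hf => bddMeas_Abar_comp (hAb f hf) hv hvp)
    (fun f hf M hM r y => have := hvp y r; abs_Abar_le (hAC f hf M hM) y _)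
    (fun f hf t ht => ?_) hst hf
  rw [← hX.integral_mul_sub_integral_mul hf (hDb f hf) (hAb f hf) hs ht hZ hR, h f (hDb f hf),
    sub_zero]

theorem isMarkovProc (hD : DenseInBddMeas D) (hDb : ∀ f ∈ D, BddMeas f)
    (hAb : ∀ f ∈ D, BddMeas (A f))
    (hAC : ∀ f ∈ D, ∀ M : ℝ, (∀ y, |f y| ≤ M) → ∀ p, |A f p| ≤ C * M)
    (hv : Measurable fun p : E × ℝ => vbar p.1 p.2) (hvp : ∀ x s, IsProbabilityMeasure (vbar x s))
    (hX : IsRelaxedSol D A ν P ℱ X fun t ω => vbar (X t ω) t) : IsMarkovProc P ℱ X := by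
  intro s t hs hst g hg
  have := hX.prob
  obtain ⟨M, hM⟩ := hg.2
  have hXs := hX.measurable hs
  refine condExp_ae_eq_condExp_of_forall_integral_mul_eq_zero (hX.progX.measurable hs).comap_le
    (hX.le s) (hg.integrable_comp (hX.measurable (hs.trans hst))) (.of_forall fun ω => hM _)
    fun Z R hZ hR hZs => ?_
  refine hX.integral_mul_eq_zero hD hDb hAb hAC hv hvp hs hst hZ hR (fun f hf => ?_) hg
  obtain ⟨K, hK⟩ := hf.2
  have hZ_int : Integrable Z P := .of_bound (hZ.mono (hX.le s)).aestronglyMeasurable R hR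
  exact integral_mul_eq_zero_of_condExp_ae_eq_zero hXs.comap_le
    (hf.1.comp (comap_measurable (X s))).stronglyMeasurable (.of_forall fun ω => hK _) hZ_int hZs

end IsRelaxedSol

end Mimicking

end MartingaleProblem

theorem stmt1_general {E 𝕌 Ω Ω' : Type*} [MeasurableSpace E] [MeasurableSingletonClass E]
    [MeasurableSpace 𝕌] {_ : MeasurableSpace Ω} {_ : MeasurableSpace Ω'} {D : Set (E → ℝ)}
    {A : (E → ℝ) → E × 𝕌 → ℝ} {ν : Measure E} (hD : DenseInBddMeas D)
    (hDb : ∀ f ∈ D, BddMeas f) (hAb : ∀ f ∈ D, BddMeas (A f))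
    (hex : ∀ (u : 𝕌) (x : E), ∃ (Ω'' : Type*) (_ : MeasurableSpace Ω'') (Q : Measure Ω'')
      (𝒢 : ℝ → MeasurableSpace Ω'') (Y : ℝ → Ω'' → E),
      IsMPSol D (fun f _ y => A f (y, u)) (Measure.dirac x) Q 𝒢 Y)
    {P : Measure Ω} {ℱ : ℝ → MeasurableSpace Ω} {X : ℝ → Ω → E} {U : ℝ → Ω → Measure 𝕌}
    (hX : IsRelaxedSol D A ν P ℱ X U) {vbar : E → ℝ → Measure 𝕌}
    (hv : Measurable fun p : E × ℝ => vbar p.1 p.2) (hvp : ∀ x s, IsProbabilityMeasure (vbar x s))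
    (hcond : ∀ f ∈ D, ∀ s : ℝ, 0 ≤ s →
      P[fun ω => Abar A f (X s ω) (U s ω) | MeasurableSpace.comap (X s) inferInstance]
        =ᵐ[P] fun ω => Abar A f (X s ω) (vbar (X s ω) s))
    {P' : Measure Ω'} {ℱ' : ℝ → MeasurableSpace Ω'} {Y : ℝ → Ω' → E}
    (hY : IsMPSol D (fun f s y => Abar A f y (vbar y s)) ν P' ℱ' Y) :
    IsRelaxedSol D A ν P' ℱ' Y (fun t ω => vbar (Y t ω) t) ∧
      (∀ t : ℝ, 0 ≤ t → P'.map (Y t) = P.map (X t)) ∧ IsMarkovProc P' ℱ' Y := by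
  have hrel := hY.isRelaxedSol hv hvp fun _ _ _ _ => rfl
  have forward_sol (u : 𝕌) (x : E) : ∃ μ, IsForwardSol D (fun f y => A f (y, u)) x μ :=
    let ⟨_, _, _, _, _, hZ⟩ := hex u x
    ⟨_, hZ.isForwardSol_map hDb fun f hf =>
      ⟨(hAb f hf).1.comp measurable_prodMk_right, (hAb f hf).2.imp fun _ hK _ => hK _⟩⟩
  obtain ⟨C, hAC⟩ := exists_forall_abs_le_mul hD hDb hAb forward_sol
  exact ⟨hrel, fun t ht => hX.map_eq_of_condExp hD hDb hAb hAC hv hvp hcond hrel ht,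
    hrel.isMarkovProc hD hDb hAb hAC hv hvp⟩

/-- **Theorem `thm:cpmsfm`.**  Under (A1)–(A5), given any solution `(X, U)`
of the relaxed controlled martingale problem for `(𝒜, ν)`, there exist a measurable
relaxed Markov control `v̄ : E × [0,∞) → P(𝕌)` and a solution `X'` of the relaxed
controlled martingale problem for `(𝒜, ν)` with the control `U' t = v̄ (X' t, t)`, such
that `X' 0` has the same law as `X 0` and `X'` has the same one-dimensional marginals as
`X`; moreover `X'` can be taken to be a Markov process. -/
theorem stmt1 {E 𝕌 : Type*}
    [TopologicalSpace E] [PolishSpace E] [MeasurableSpace E] [BorelSpace E]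
    [TopologicalSpace 𝕌] [PolishSpace 𝕌] [MeasurableSpace 𝕌] [BorelSpace 𝕌]
    (D : Set (E → ℝ)) (A : (E → ℝ) → E × 𝕌 → ℝ)
    (ν : Measure E) (hν : IsProbabilityMeasure ν)
    -- `𝒜` maps its domain (bounded measurable functions) to bounded measurable functions
    (hDbm : ∀ f ∈ D, BddMeas f) (hAbm : ∀ f ∈ D, BddMeas (A f))
    -- `𝒜` is a linear operator
    (hadd : ∀ f ∈ D, ∀ g ∈ D, f + g ∈ D ∧ A (f + g) = A f + A g)
    (hsmul : ∀ (c : ℝ), ∀ f ∈ D, c • f ∈ D ∧ A (c • f) = c • A f)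
    -- (A1): countable bp-dense subset of the graph of `𝒜`
    (hA1 : ∃ gk : ℕ → E → ℝ, (∀ k, gk k ∈ D) ∧ ∀ g ∈ D,
      pairFun g (A g) ∈ bpClosure {F | ∃ k, F = pairFun (gk k) (A (gk k))})
    -- (A2): `D(𝒜)` is an algebra separating points, containing constants; `𝒜 𝟏 = 0`
    (hmul : ∀ f ∈ D, ∀ g ∈ D, f * g ∈ D)
    (hconst : ∀ c : ℝ, (fun _ : E => c) ∈ D)
    (hsep : ∀ x y : E, x ≠ y → ∃ f ∈ D, f x ≠ f y)
    (hone : A (fun _ => 1) = 0)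
    -- (A3)(i): for every `u, x` the martingale problem for `(𝒜^u, δ_x)` has an
    -- r.c.l.l. solution
    (hA3i : ∀ (u : 𝕌) (x : E), ∃ (Ω' : Type) (m' : MeasurableSpace Ω') (P' : Measure Ω')
      (ℱ' : ℝ → MeasurableSpace Ω') (Y : ℝ → Ω' → E),
      IsMPSol D (fun f _ y => A f (y, u)) (Measure.dirac x) P' ℱ' Y ∧
      ∀ ω, RCLLPath fun r => Y r ω)
    -- (A3)(ii): each `𝒜^u` is dissipative
    (hA3ii : ∀ (u : 𝕌) (lam : ℝ), 0 < lam → ∀ f ∈ D,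
      lam * (⨆ x, |f x|) ≤ ⨆ x, |lam * f x - A f (x, u)|)
    -- (A3)(iii): `D(𝒜)` is dense in `B_b(E)` (in supremum norm)
    (hA3iii : ∀ g : E → ℝ, BddMeas g → ∀ ε : ℝ, 0 < ε → ∃ f ∈ D, ∀ x, |f x - g x| ≤ ε)
    -- (A3)(iv): `Range (I - 𝒜^u) = B_b(E)`
    (hA3iv : ∀ (u : 𝕌) (g : E → ℝ), BddMeas g → ∃ f ∈ D, ∀ x, f x - A f (x, u) = g x)
    -- the given solution of the relaxed controlled martingale problem
    {Ω : Type*} [m0 : MeasurableSpace Ω] (P : Measure Ω)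
    (ℱ : ℝ → MeasurableSpace Ω) (X : ℝ → Ω → E) (U : ℝ → Ω → Measure 𝕌)
    (hsol : IsRelaxedSol D A ν P ℱ X U)
    -- (A4) and (A5), for the measurable selection `v̄` attached to `(X, U)`
    (hA45 : ∃ vbar : E → ℝ → Measure 𝕌,
      Measurable (fun p : E × ℝ => vbar p.1 p.2) ∧
      (∀ x s, IsProbabilityMeasure (vbar x s)) ∧
      -- (A4): `E[𝒜̄ f (X s, U s) | X s] = 𝒜̄^{v̄(X s, s)} f (X s)` a.s.
      (∀ f ∈ D, ∀ s : ℝ, 0 ≤ s →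
        (P[fun ω => Abar A f (X s ω) (U s ω)|MeasurableSpace.comap (X s) inferInstance])
          =ᵐ[P] fun ω => Abar A f (X s ω) (vbar (X s ω) s)) ∧
      -- (A4): the martingale problem for `(𝒜̄^{v̄(⋅,⋅)}, ν')`, w.r.t. the natural
      -- filtration of the solution, has a solution for every initial law `ν'`
      (∀ ν' : Measure E, IsProbabilityMeasure ν' →
        ∃ (Ω' : Type) (m' : MeasurableSpace Ω') (P' : Measure Ω') (Y : ℝ → Ω' → E),
          IsMPSol D (fun f s y => Abar A f y (vbar y s)) ν' P'
            (fun t => ⨆ r ∈ Icc (0:ℝ) t, MeasurableSpace.comap (Y r) inferInstance) Y) ∧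
      -- (A5): the martingale problem for `(𝒜̄^{v̄(⋅,⋅)}, δ_x)` has a Markov solution
      (∀ x : E, ∃ (Ω' : Type) (m' : MeasurableSpace Ω') (P' : Measure Ω')
        (ℱ' : ℝ → MeasurableSpace Ω') (Y : ℝ → Ω' → E),
        IsMPSol D (fun f s y => Abar A f y (vbar y s)) (Measure.dirac x) P' ℱ' Y ∧
        IsMarkovProc P' ℱ' Y)) :
    -- conclusion: a Markov control and a Markov mimic with the same marginals
    ∃ vbar : E → ℝ → Measure 𝕌,
      Measurable (fun p : E × ℝ => vbar p.1 p.2) ∧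
      (∀ x s, IsProbabilityMeasure (vbar x s)) ∧
      ∃ (Ω' : Type) (m' : MeasurableSpace Ω') (P' : Measure Ω')
        (ℱ' : ℝ → MeasurableSpace Ω') (X' : ℝ → Ω' → E),
        IsRelaxedSol D A ν P' ℱ' X' (fun t ω => vbar (X' t ω) t) ∧
        P'.map (X' 0) = P.map (X 0) ∧
        (∀ t : ℝ, 0 ≤ t → P'.map (X' t) = P.map (X t)) ∧
        IsMarkovProc P' ℱ' X' := by
  obtain ⟨vbar, hv, hvp, hcond, hex, -⟩ := hA45
  obtain ⟨Ω', m', P', Y, hY⟩ := hex ν hν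
  obtain ⟨hrel, hmap, hMarkov⟩ := stmt1_general hA3iii hDbm hAbm
    (fun u x => let ⟨Ω', m', P', ℱ', Y, hY, _⟩ := hA3i u x; ⟨Ω', m', P', ℱ', Y, hY⟩)
    hsol hv hvp hcond hY
  exact ⟨vbar, hv, hvp, Ω', m', P', _, Y, hrel, hmap 0 le_rfl, hmap, hMarkov⟩
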